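/- There is no 3×3 unitary complex matrix U such that the diagonal entries of U·diag(1, 0, i)·Uᴴ are (1/2, i/2, (1+i)/2), i.e. such that the (1,1), (2,2) and (3,3) entries of U·diag(1, 0, i)·Uᴴ equal 1/2, i/2 and (1+i)/2 respectively, where i denotes the imaginary unit. -/

import Mathlib

/-!
The `j`-th diagonal entry of `U diag(1, 0, i) Uᴴ` is `|U j 0|² + i |U j 2|²`, so real and imaginary
parts determine the moduli of the entries of columns `0` and `2`. The prescribed diagonal forces
`U 0 2 = 0`, `U 1 0 = 0`, while `U 2 0` and `U 2 2` are nonzero. The inner product of columns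
`0` and `2` is then the single nonzero term `conj (U 2 0) * U 2 2`, contradicting orthogonality.
-/

open Matrix

lemma diag_entry (U : Matrix (Fin 3) (Fin 3) ℂ) (j : Fin 3) :
    (U * Matrix.diagonal ![1, 0, Complex.I] * Uᴴ) j j =
      ⟨Complex.normSq (U j 0), Complex.normSq (U j 2)⟩ := by
  apply Complex.ext <;>
    simp [Matrix.mul_apply, Fin.sum_univ_three, Matrix.diagonal_apply, Complex.normSq_apply] <;> ring

/-- Arveson's example: there is no `3 × 3` unitary `U` such that
`U diag(1, 0, i) Uᴴ` has diagonal `(1/2, i/2, (1+i)/2)`. -/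
theorem no_unitary_with_prescribed_diagonal_arveson :
    ¬ ∃ U : Matrix (Fin 3) (Fin 3) ℂ, Uᴴ * U = 1 ∧
      (U * Matrix.diagonal ![1, 0, Complex.I] * Uᴴ) 0 0 = 1 / 2 ∧
      (U * Matrix.diagonal ![1, 0, Complex.I] * Uᴴ) 1 1 = Complex.I / 2 ∧
      (U * Matrix.diagonal ![1, 0, Complex.I] * Uᴴ) 2 2 = (1 + Complex.I) / 2 := by
  rintro ⟨U, hU, h0, h1, h2⟩
  rw [diag_entry] at h0 h1 h2
  have h02 : U 0 2 = 0 := by simpa using congrArg Complex.im h0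
  have h10 : U 1 0 = 0 := by simpa using congrArg Complex.re h1
  have h20 : U 2 0 ≠ 0 := by
    intro h
    simpa [h] using congrArg Complex.re h2
  have h22 : U 2 2 ≠ 0 := by
    intro h
    simpa [h] using congrArg Complex.im h2
  have horth : (Uᴴ * U) 0 2 = 0 := by simp [hU]
  simp [Matrix.mul_apply, Fin.sum_univ_three, h02, h10, h20, h22] at horth
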